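/- Let f : V → ℝ be a nonzero linear functional on a finite-dimensional real vector space, A an alcove of a hyperplane arrangement containing the hyperplane H = {f = 0} among its walls, and P_t ⊂ ℝ^n a family of polytopes depending on a parameter t ∈ [0,1], given as P_t = {x : g_i(x) ≤ c_i + t·d_i, i ∈ I} for affine functionals g_i and constants c_i, d_i, such that P_1 has nonempty interior and P_0 is a polytope whose affine span has codimension k. Then Vol(P_t) = t^k · (V₀ + O(t)) for some V₀ > 0 as t → 0⁺; in particular the vanishing order of Vol(P_t) at t = 0 equals the codimension of the affine span of P_0. -/

import Mathlib

open MeasureTheory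

lemma vv_bdd {n : ℕ} {I : Type*} [Fintype I] (l : I → ((Fin n → ℝ) →ₗ[ℝ] ℝ)) (J : Set I)
    (K : Submodule ℝ (Fin n → ℝ)) (h : ∀ u ∈ K, (∀ i ∈ J, l i u ≤ 0) → u = 0) (M : ℝ) :
    ∃ R : ℝ, ∀ w ∈ K, (∀ i ∈ J, l i w ≤ M) → ‖w‖ ≤ R := by
  classical
  set f : (Fin n → ℝ) → ℝ := fun w => ∑ i, if i ∈ J then max (l i w) 0 else 0 with hf
  have hterm : ∀ w i, 0 ≤ (if i ∈ J then max (l i w) 0 else (0:ℝ)) := by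
    intro w i; split_ifs <;> simp
  have hc : Continuous f := by
    refine continuous_finsetSum _ fun i _ => ?_
    by_cases hi : i ∈ J
    · simp only [hi, if_true]
      exact ((l i).continuous_of_finiteDimensional).max continuous_const
    · simp only [hi, if_false]; exact continuous_const
  have hcomp : IsCompact ((K : Set (Fin n → ℝ)) ∩ Metric.sphere 0 1) :=
    (isCompact_sphere _ _).inter_left K.closed_of_finiteDimensional
  have hpos : ∀ w ∈ (K : Set (Fin n → ℝ)) ∩ Metric.sphere 0 1, 0 < f w := by
    rintro w ⟨hwK, hw⟩
    by_contra hcon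
    have h0 : f w = 0 := le_antisymm (not_lt.1 hcon) (Finset.sum_nonneg fun i _ => hterm w i)
    rw [hf] at h0
    have := (Finset.sum_eq_zero_iff_of_nonneg (fun i _ => hterm w i)).1 h0
    have hw0 : w = 0 := h w hwK fun i hi => by
      have := this i (Finset.mem_univ _)
      simp only [hi, if_true] at this
      exact this ▸ le_max_left _ _
    simp [hw0] at hw
  obtain ⟨δ, hδ, hmin⟩ : ∃ δ > 0, ∀ w ∈ (K : Set (Fin n → ℝ)) ∩ Metric.sphere 0 1, δ ≤ f w := by
    rcases Set.eq_empty_or_nonempty ((K : Set (Fin n → ℝ)) ∩ Metric.sphere 0 1) with he | hne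
    · exact ⟨1, one_pos, by simp [he]⟩
    · obtain ⟨w, hw, hm⟩ := hcomp.exists_isMinOn hne hc.continuousOn
      exact ⟨f w, hpos w hw, fun v hv => hm hv⟩
  refine ⟨(Fintype.card I * |M|) / δ, fun w hwK hw => ?_⟩
  have hfM : f w ≤ Fintype.card I * |M| := by
    have : f w ≤ ∑ i : I, |M| := by
      refine Finset.sum_le_sum fun i _ => ?_
      split_ifs with hi
      · exact max_le ((hw i hi).trans (le_abs_self _)) (abs_nonneg _)
      · exact abs_nonneg _
    simpa using this
  rw [le_div_iff₀ hδ]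
  refine le_trans ?_ hfM
  by_cases hw0 : w = 0
  · simp only [hw0, norm_zero, zero_mul]
    exact Finset.sum_nonneg fun i _ => hterm 0 i
  have hn : 0 < ‖w‖ := norm_pos_iff.2 hw0
  have h1 := hmin (‖w‖⁻¹ • w) ⟨K.smul_mem _ hwK, by simp [norm_smul, hn.ne']⟩
  have h2 : f (‖w‖⁻¹ • w) = ‖w‖⁻¹ * f w := by
    simp only [hf, Finset.mul_sum]
    refine Finset.sum_congr rfl fun i _ => ?_
    split_ifs
    · rw [map_smul, smul_eq_mul, mul_max_of_nonneg _ _ (inv_nonneg.2 hn.le), mul_zero]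
    · simp
  rw [h2] at h1
  calc ‖w‖ * δ ≤ ‖w‖ * (‖w‖⁻¹ * f w) := by gcongr
    _ = f w := by field_simp

lemma vv_point {n : ℕ} {I : Type*} (g : I → ((Fin n → ℝ) →ᵃ[ℝ] ℝ)) (c : I → ℝ)
    (hne : ∃ x, ∀ i, g i x ≤ c i) (s : Finset I) :
    ∃ x, (∀ i, g i x ≤ c i) ∧ ∀ i ∈ s, g i x = c i → ∀ y, (∀ j, g j y ≤ c j) → g i y = c i := by
  classical
  induction s using Finset.induction_on with
  | empty => obtain ⟨x, hx⟩ := hne; exact ⟨x, hx, by simp⟩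
  | insert i s _ ih =>
    obtain ⟨x, hx, hs⟩ := ih
    by_cases hy : ∃ y, (∀ j, g j y ≤ c j) ∧ g i y < c i
    · obtain ⟨y, hy, hyi⟩ := hy
      have hmid : ∀ j, g j (midpoint ℝ x y) = (g j x + g j y) / 2 := fun j => by
        rw [AffineMap.map_midpoint, midpoint_eq_smul_add, smul_eq_mul]; simp; ring
      refine ⟨midpoint ℝ x y, fun j => ?_, fun j hj hje => ?_⟩
      · rw [hmid]; linarith [hx j, hy j]
      · rw [hmid] at hje
        rcases Finset.mem_insert.1 hj with rfl | hj
        · linarith [hx j]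
        · exact hs j hj (by linarith [hx j, hy j])
    · push Not at hy
      refine ⟨x, hx, fun j hj hje => ?_⟩
      rcases Finset.mem_insert.1 hj with rfl | hj
      · exact fun y hyy => le_antisymm (hyy _) (hy y hyy)
      · exact hs j hj hje

lemma vv_null {n : ℕ} (l : (Fin n → ℝ) →ₗ[ℝ] ℝ) (a : ℝ) (ha : 0 < a) :
    volume {x | l x = a} = 0 := by
  have := Measure.addHaar_affineSubspace (volume : Measure (Fin n → ℝ))
    (AffineSubspace.comap l.toAffineMap (AffineSubspace.mk' a ⊥)) (by
      intro h
      have : (0 : Fin n → ℝ) ∈ AffineSubspace.comap l.toAffineMap (AffineSubspace.mk' a ⊥) := by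
        rw [h]; trivial
      simp [AffineSubspace.mem_mk'] at this
      linarith)
  convert this using 2
  ext x
  simp [AffineSubspace.mem_mk', sub_eq_zero]

lemma vv_det {n : ℕ} (D : Submodule ℝ (Fin n → ℝ)) (p : (Fin n → ℝ) →ₗ[ℝ] (Fin n → ℝ))
    (hpD : ∀ x, p x ∈ D) (hp : ∀ x ∈ D, p x = x) (t : ℝ) :
    LinearMap.det (p + t • (LinearMap.id - p)) = t ^ (n - Module.finrank ℝ D) := by
  have he : D ≤ D.comap (p + t • (LinearMap.id - p)) := by
    intro x hx
    simp [hp x hx, hx]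
  rw [LinearMap.det_eq_det_mul_det D _ he]
  have h1 : (p + t • (LinearMap.id - p)).restrict he = LinearMap.id := by
    ext x : 2
    have := hp x x.2
    simp [LinearMap.restrict_apply, this]
  have h2 : D.mapQ D (p + t • (LinearMap.id - p)) he = t • LinearMap.id := by
    refine LinearMap.ext fun q => ?_
    obtain ⟨x, rfl⟩ := D.mkQ_surjective q
    simp only [Submodule.mkQ_apply, Submodule.mapQ_apply, LinearMap.smul_apply, LinearMap.id_apply]
    rw [← Submodule.Quotient.mk_smul, Submodule.Quotient.eq]
    have : (p + t • (LinearMap.id - p) : (Fin n → ℝ) →ₗ[ℝ] (Fin n → ℝ)) x - t • x = (1 - t) • p x := by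
      simp only [LinearMap.add_apply, LinearMap.smul_apply, LinearMap.sub_apply, LinearMap.id_apply]
      module
    rw [this]
    exact D.smul_mem _ (hpD x)
  rw [h1, h2, LinearMap.det_smul, LinearMap.det_id, LinearMap.det_id, Submodule.finrank_quotient]
  simp

/-- For a family of polytopes `P_t = {x : g_i(x) ≤ c_i + t·d_i}` interpolating between a
full-dimensional polytope `P_1` and a degenerate polytope `P_0` whose affine span has
codimension `k`, the volume satisfies `Vol(P_t) = t^k (V₀ + O(t))` with `V₀ > 0` as
`t → 0⁺`; in particular the vanishing order of `Vol(P_t)` at `t = 0` equals the codimension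
of the affine span of `P_0`. -/
theorem volume_vanishing_order_eq_codim (n k : ℕ) (hk : k ≤ n) {I : Type*} [Fintype I]
    (g : I → ((Fin n → ℝ) →ᵃ[ℝ] ℝ)) (c d : I → ℝ)
    (P : ℝ → Set (Fin n → ℝ))
    (hP : ∀ t, P t = {x | ∀ i, g i x ≤ c i + t * d i})
    (hbdd : ∀ t ∈ Set.Icc (0:ℝ) 1, Bornology.IsBounded (P t))
    (hfull : (interior (P 1)).Nonempty)
    (hne : (P 0).Nonempty)
    (hcodim : Module.finrank ℝ (affineSpan ℝ (P 0)).direction = n - k) :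
    ∃ V₀ : ℝ, 0 < V₀ ∧
      Filter.Tendsto (fun t : ℝ => (volume (P t)).toReal / t ^ k)
        (nhdsWithin 0 (Set.Ioi 0)) (nhds V₀) := by
  classical
  have hP0 : ∀ x, x ∈ P 0 ↔ ∀ i, g i x ≤ c i := fun x => by rw [hP]; simp
  obtain ⟨x0, hx0, hrel⟩ := vv_point g c (by obtain ⟨x, hx⟩ := hne; exact ⟨x, (hP0 x).1 hx⟩)
    Finset.univ
  have hx0P : x0 ∈ P 0 := (hP0 x0).2 hx0
  -- linear parts and slacks
  obtain ⟨l, hl⟩ : ∃ l : I → ((Fin n → ℝ) →ₗ[ℝ] ℝ), ∀ i v, g i (x0 + v) = g i x0 + l i v :=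
    ⟨fun i => (g i).linear, fun i v => by
      have := (g i).map_vadd x0 v
      simp only [vadd_eq_add] at this
      rw [add_comm x0 v, this, add_comm]⟩
  obtain ⟨a, ha⟩ : ∃ a : I → ℝ, ∀ i, a i = c i - g i x0 := ⟨_, fun _ => rfl⟩
  have ha0 : ∀ i, 0 ≤ a i := fun i => by rw [ha]; linarith [hx0 i]
  have hPt : ∀ t v, x0 + v ∈ P t ↔ ∀ i, l i v ≤ a i + t * d i := by
    intro t v
    rw [hP]
    refine forall_congr' fun i => ?_
    rw [hl, ha]
    constructor <;> intro h <;> linarith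
  set D := (affineSpan ℝ (P 0)).direction with hD
  have hlD : ∀ i, a i = 0 → ∀ v ∈ D, l i v = 0 := by
    intro i hi v hv
    have hconst : ∀ y ∈ P 0, g i y = c i := fun y hy =>
      hrel i (Finset.mem_univ _) (by linarith [ha i]) y ((hP0 y).1 hy)
    have hle : D ≤ LinearMap.ker (l i) := by
      rw [hD, direction_affineSpan, vectorSpan_def, Submodule.span_le]
      rintro _ ⟨y, hy, z, hz, rfl⟩
      have e1 := hl i (y - x0)
      have e2 := hl i (z - x0)
      rw [add_sub_cancel, hconst _ ‹_›] at e1 e2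
      have : y -ᵥ z = (y - x0) - (z - x0) := by simp
      simp only [SetLike.mem_coe, LinearMap.mem_ker]
      rw [this, map_sub]
      linarith
    exact hle hv
  have hmemD : ∀ v, x0 + v ∈ P 0 → v ∈ D := by
    intro v hv
    have := AffineSubspace.vsub_mem_direction (subset_affineSpan ℝ _ hv)
      (subset_affineSpan ℝ _ hx0P)
    simpa using this
  -- the projection
  obtain ⟨q, hq⟩ := LinearMap.exists_leftInverse_of_injective D.subtype (by simp)
  obtain ⟨p, hpdef⟩ : ∃ p : (Fin n → ℝ) →ₗ[ℝ] (Fin n → ℝ), p = D.subtype ∘ₗ q := ⟨_, rfl⟩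
  have hpD : ∀ x, p x ∈ D := fun x => by rw [hpdef]; simp
  have hp : ∀ x ∈ D, p x = x := fun x hx => by
    have := LinearMap.congr_fun hq ⟨x, hx⟩
    rw [hpdef]
    simpa using congrArg Subtype.val this
  have hdet := vv_det D p hpD hp
  rw [hcodim, Nat.sub_sub_self hk] at hdet
  have hpc : Continuous p := p.continuous_of_finiteDimensional
  have hlc : ∀ i, Continuous (l i) := fun i => (l i).continuous_of_finiteDimensional
  have hlp : ∀ i, a i = 0 → ∀ x, l i (p x) = 0 := fun i hi x => hlD i hi _ (hpD x)
  set S : ℝ → ((Fin n → ℝ) →ₗ[ℝ] (Fin n → ℝ)) := fun t => p + t • (LinearMap.id - p) with hS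
  have hSx : ∀ t x, S t x = p x + t • (x - p x) := fun t x => by simp [hS]
  obtain ⟨Q, hQ⟩ : ∃ Q : ℝ → Set (Fin n → ℝ), ∀ t, Q t = {x | x0 + S t x ∈ P t} :=
    ⟨_, fun _ => rfl⟩
  have hQm : ∀ t x, x ∈ Q t ↔ ∀ i, l i (p x) + t * (l i x - l i (p x)) ≤ a i + t * d i := by
    intro t x
    rw [hQ]
    show x0 + S t x ∈ P t ↔ _
    rw [hPt]
    simp only [hSx, map_add, map_smul, map_sub, smul_eq_mul]
  obtain ⟨A, hA⟩ : ∃ A : Set (Fin n → ℝ), ∀ x, x ∈ A ↔ ∀ i, if a i = 0 then l i x ≤ d i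
      else l i (p x) ≤ a i := ⟨{x | _}, fun _ => Iff.rfl⟩
  have hvol : ∀ t, 0 < t → (volume (Q t)).toReal = (volume (P t)).toReal / t ^ k := by
    intro t ht
    have e : Q t = S t ⁻¹' ((fun y => x0 + y) ⁻¹' P t) := by rw [hQ]; rfl
    have htk : 0 < t ^ k := pow_pos ht k
    rw [e, Measure.addHaar_preimage_linearMap _ (by rw [hdet]; exact htk.ne'), hdet,
      measure_preimage_add, ENNReal.toReal_mul, ENNReal.toReal_ofReal (abs_nonneg _),
      abs_of_pos (inv_pos.2 htk)]
    field_simp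
  -- trivial cones
  have hcone1 : ∀ u ∈ (⊤ : Submodule ℝ (Fin n → ℝ)), (∀ i ∈ (Set.univ : Set I), l i u ≤ 0) →
      u = 0 := by
    intro u _ hu
    by_contra hu0
    obtain ⟨R, hR⟩ := (hbdd 0 (by simp)).exists_norm_le
    have hn : 0 < ‖u‖ := norm_pos_iff.2 hu0
    have hR0 : 0 ≤ R := (norm_nonneg _).trans (hR x0 hx0P)
    obtain ⟨s, hs⟩ : ∃ s : ℝ, s = (R + ‖x0‖ + 1) / ‖u‖ := ⟨_, rfl⟩
    have hs0 : 0 ≤ s := by rw [hs]; positivity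
    have hmem : x0 + s • u ∈ P 0 := (hPt 0 _).2 fun i => by
      have := mul_nonneg hs0 (neg_nonneg.2 (hu i trivial))
      rw [map_smul, smul_eq_mul]
      nlinarith [ha0 i]
    have h1 := hR _ hmem
    have h2 : ‖s • u‖ ≤ ‖x0 + s • u‖ + ‖x0‖ := by
      have := norm_sub_le (x0 + s • u) x0
      simpa using this
    have h3 : s * ‖u‖ = R + ‖x0‖ + 1 := by rw [hs, div_mul_cancel₀ _ hn.ne']
    rw [norm_smul, Real.norm_of_nonneg hs0, h3] at h2
    linarith
  have hcone2 : ∀ u ∈ LinearMap.ker p, (∀ i ∈ {i | a i = 0}, l i u ≤ 0) → u = 0 := by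
    intro u hu hle
    have hev : ∀ᶠ s : ℝ in nhdsWithin 0 (Set.Ioi 0), ∀ i, s * l i u ≤ a i := by
      rw [Filter.eventually_all]
      intro i
      by_cases hi : a i = 0
      · filter_upwards [self_mem_nhdsWithin] with s hs
        rw [hi]
        exact mul_nonpos_of_nonneg_of_nonpos (le_of_lt hs) (hle i hi)
      · have hpos : 0 < a i := lt_of_le_of_ne (ha0 i) (Ne.symm hi)
        have : Filter.Tendsto (fun s : ℝ => s * l i u) (nhdsWithin 0 (Set.Ioi 0)) (nhds 0) := by
          have : Continuous (fun s : ℝ => s * l i u) := by fun_prop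
          simpa using (this.tendsto 0).mono_left nhdsWithin_le_nhds
        exact (this.eventually (gt_mem_nhds hpos)).mono fun s hs => le_of_lt hs
    obtain ⟨s, hs, hs0⟩ := (hev.and self_mem_nhdsWithin).exists
    have hs0 : (0:ℝ) < s := hs0
    have hD' : s • u ∈ D := hmemD _ ((hPt 0 _).2 fun i => by simpa using hs i)
    have := hp _ hD'
    rw [map_smul, LinearMap.mem_ker.1 hu, smul_zero] at this
    exact (smul_eq_zero.1 this.symm).resolve_left hs0.ne'
  -- uniform bound
  obtain ⟨M, hM⟩ : ∃ M : ℝ, ∀ i, a i + |d i| ≤ M ∧ d i ≤ M := by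
    refine ⟨∑ i, (a i + |d i|), fun i => ?_⟩
    have : a i + |d i| ≤ ∑ i, (a i + |d i|) :=
      Finset.single_le_sum (f := fun i => a i + |d i|)
        (fun j _ => add_nonneg (ha0 j) (abs_nonneg _)) (Finset.mem_univ i)
    exact ⟨this, by linarith [le_abs_self (d i), ha0 i]⟩
  obtain ⟨R1, hR1⟩ := vv_bdd l Set.univ ⊤ hcone1 M
  obtain ⟨R2, hR2⟩ := vv_bdd l {i | a i = 0} (LinearMap.ker p) hcone2 M
  have hpp : ∀ x, p (p x) = p x := fun x => hp _ (hpD x)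
  have hker : ∀ x, x - p x ∈ LinearMap.ker p := fun x => by simp [hpp]
  obtain ⟨C, hC0, hC⟩ : ∃ C : ℝ, 0 ≤ C ∧ ∀ x, ‖p x‖ ≤ C * ‖x‖ :=
    ⟨‖LinearMap.toContinuousLinearMap p‖, norm_nonneg _,
      fun x => (LinearMap.toContinuousLinearMap p).le_opNorm x⟩
  have hbound : ∀ t, 0 < t → t ≤ 1 → Q t ⊆ Metric.closedBall 0 (C * R1 + R2) := by
    intro t ht ht1 x hx
    have hx' := (hQm t x).1 hx
    have h1 : ‖S t x‖ ≤ R1 := hR1 _ trivial fun i _ => by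
      have h := hx' i
      rw [hSx, map_add, map_smul, map_sub, smul_eq_mul]
      have : t * d i ≤ |d i| := by
        have := mul_le_mul_of_nonneg_left (le_abs_self (d i)) ht.le
        nlinarith [abs_nonneg (d i)]
      linarith [(hM i).1]
    have h2 : p (S t x) = p x := by
      rw [hSx, map_add, hpp, map_smul, LinearMap.mem_ker.1 (hker x)]; simp
    have h3 : ‖p x‖ ≤ C * R1 := by
      rw [← h2]
      exact (hC _).trans (mul_le_mul_of_nonneg_left h1 hC0)
    have h4 : ‖x - p x‖ ≤ R2 := hR2 _ (hker x) fun i hi => by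
      have h := hx' i
      have hi : a i = 0 := hi
      rw [hlp i hi, hi] at h
      rw [map_sub, hlp i hi]
      have : t * (l i x - 0) ≤ t * d i := by linarith
      exact (le_of_mul_le_mul_left this ht).trans (hM i).2
    rw [mem_closedBall_zero_iff]
    calc ‖x‖ = ‖p x + (x - p x)‖ := by simp
      _ ≤ ‖p x‖ + ‖x - p x‖ := norm_add_le _ _
      _ ≤ _ := add_le_add h3 h4
  have hAsetmeas : MeasurableSet A := by
    have : A = ⋂ i, {x | if a i = 0 then l i x ≤ d i else l i (p x) ≤ a i} := by
      ext x; simp [hA]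
    rw [this]
    refine MeasurableSet.iInter fun i => ?_
    by_cases hi : a i = 0
    · simp only [hi, if_true]
      exact (isClosed_le (hlc i) continuous_const).measurableSet
    · simp only [hi, if_false]
      exact (isClosed_le ((hlc i).comp hpc) continuous_const).measurableSet
  have hQmeas : ∀ t, MeasurableSet (Q t) := by
    intro t
    have : Q t = ⋂ i, {x | l i (p x) + t * (l i x - l i (p x)) ≤ a i + t * d i} := by
      ext x; simp [hQm]
    rw [this]
    refine MeasurableSet.iInter fun i => ?_
    have h1 := hlc i
    have h2 : Continuous fun x => l i (p x) := (hlc i).comp hpc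
    exact (isClosed_le (by fun_prop) continuous_const).measurableSet
  have hIoc : ∀ᶠ t : ℝ in nhdsWithin 0 (Set.Ioi 0), 0 < t ∧ t ≤ 1 := by
    filter_upwards [Ioc_mem_nhdsGT (zero_lt_one' ℝ)] with t ht using ht
  have hev : ∀ᶠ t : ℝ in nhdsWithin 0 (Set.Ioi 0), Q t ⊆ Metric.closedBall 0 (C * R1 + R2) :=
    hIoc.mono fun t ht => hbound t ht.1 ht.2
  have hlim : ∀ᵐ x ∂(volume : Measure (Fin n → ℝ)),
      ∀ᶠ t : ℝ in nhdsWithin 0 (Set.Ioi 0), x ∈ Q t ↔ x ∈ A := by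
    have hnull : ∀ᵐ x ∂(volume : Measure (Fin n → ℝ)), ∀ i, a i ≠ 0 → l i (p x) ≠ a i := by
      rw [ae_all_iff]
      intro i
      by_cases hi : a i = 0
      · simp [hi]
      · have := vv_null (l i ∘ₗ p) (a i) (lt_of_le_of_ne (ha0 i) (Ne.symm hi))
        rw [ae_iff]
        simpa [hi] using this
    filter_upwards [hnull] with x hx
    have : ∀ᶠ t : ℝ in nhdsWithin 0 (Set.Ioi 0), ∀ i,
        (l i (p x) + t * (l i x - l i (p x)) ≤ a i + t * d i ↔
          if a i = 0 then l i x ≤ d i else l i (p x) ≤ a i) := by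
      rw [Filter.eventually_all]
      intro i
      by_cases hi : a i = 0
      · filter_upwards [self_mem_nhdsWithin] with t ht
        have ht : 0 < t := ht
        simp only [hi, if_true, hlp i hi]
        simp [ht]
      · simp only [hi, if_false]
        have hcont : Continuous fun t : ℝ => a i + t * d i -
            (l i (p x) + t * (l i x - l i (p x))) := by fun_prop
        have htend := (hcont.tendsto 0).mono_left (nhdsWithin_le_nhds (s := Set.Ioi 0))
        simp only [zero_mul, add_zero] at htend
        rcases lt_or_gt_of_ne (hx i hi) with h | h
        · filter_upwards [htend.eventually (lt_mem_nhds (sub_pos.2 h))] with t ht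
          exact ⟨fun _ => h.le, fun _ => by linarith⟩
        · filter_upwards [htend.eventually (gt_mem_nhds (sub_neg.2 h))] with t ht
          exact ⟨fun h' => by linarith, fun h' => by linarith⟩
    filter_upwards [this] with t ht
    rw [hQm, hA]
    exact forall_congr' ht
  have htends := tendsto_measure_of_ae_tendsto_indicator (nhdsWithin (0:ℝ) (Set.Ioi 0)) hAsetmeas
    hQmeas measurableSet_closedBall (measure_closedBall_lt_top.ne) hev hlim
  have hAfin : volume A ≠ ⊤ := by
    have : volume A ≤ volume (Metric.closedBall (0 : Fin n → ℝ) (C * R1 + R2)) :=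
      le_of_tendsto htends (hev.mono fun t ht => measure_mono ht)
    exact (this.trans_lt measure_closedBall_lt_top).ne
  have hApos : 0 < volume A := by
    obtain ⟨z, hz⟩ := hfull
    obtain ⟨w, hw⟩ : ∃ w, w = z - x0 := ⟨_, rfl⟩
    have hO1 : IsOpen {x : Fin n → ℝ | ∀ i, a i ≠ 0 → l i (p x) < a i} := by
      simp only [Set.ofPred_forall]
      refine isOpen_iInter_of_finite fun i => ?_
      refine isOpen_iInter_of_finite fun _ => ?_
      exact isOpen_lt ((hlc i).comp hpc) continuous_const
    have hO2 : IsOpen ((fun x : Fin n → ℝ => x0 + (x + p w)) ⁻¹' interior (P 1)) :=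
      isOpen_interior.preimage (by fun_prop)
    have hsub : {x : Fin n → ℝ | ∀ i, a i ≠ 0 → l i (p x) < a i} ∩
        ((fun x : Fin n → ℝ => x0 + (x + p w)) ⁻¹' interior (P 1)) ⊆ A := by
      rintro x ⟨hx1, hx2⟩
      rw [hA]
      intro i
      split_ifs with hi
      · have := (hPt 1 _).1 (interior_subset hx2) i
        rw [map_add, hlp i hi, hi] at this
        linarith
      · exact (hx1 i hi).le
    refine lt_of_lt_of_le ((hO1.inter hO2).measure_pos volume ⟨w - p w, ?_, ?_⟩)
      (measure_mono hsub)
    · intro i hi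
      rw [LinearMap.mem_ker.1 (hker w), map_zero]
      exact lt_of_le_of_ne (ha0 i) (Ne.symm hi)
    · simp only [Set.mem_preimage, sub_add_cancel]
      rw [hw, add_sub_cancel]
      exact hz
  refine ⟨(volume A).toReal, ENNReal.toReal_pos hApos.ne' hAfin, ?_⟩
  refine ((ENNReal.tendsto_toReal hAfin).comp htends).congr' ?_
  filter_upwards [hIoc] with t ht
  exact hvol t ht.1
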